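/- Let G be a finite group with subgroups K_i, i ∈ I, where I is a finite set with |I| = n+1 ≥ 2, let X = X(G,(K_i)_{i∈I}) be the coset complex, and assume G acts transitively on X(n). Suppose the subgroups boundedly generate G and set N_0' = 1 + max_{g∈G} min{ l : g = g_1⋯g_l with g_1,...,g_l ∈ ⋃_i K_i }. Then Exp^0_b(X) ≥ 1/((n+1)·N_0'). -/

import Mathlib

open Finset

/-- A finite simplicial complex on vertex type `V`. -/
structure SCplx (V : Type) [DecidableEq V] where
  faces : Finset (Finset V)
  empty_mem : ∅ ∈ faces
  down_closed : ∀ σ ∈ faces, ∀ τ ⊆ σ, τ ∈ faces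

namespace SCplx

variable {V : Type} [DecidableEq V]

/-- Faces of cardinality `m`, i.e. the faces in `X(m-1)`. -/
def cfaces (X : SCplx V) (m : ℕ) : Finset (Finset V) :=
  X.faces.filter fun σ => σ.card = m

/-- `X` is pure `n`-dimensional. -/
def Pure (X : SCplx V) (n : ℕ) : Prop :=
  ∀ σ ∈ X.faces, ∃ τ ∈ X.cfaces (n + 1), σ ⊆ τ

/-- a chain/cochain of grade `m`: supported on faces of cardinality `m`. -/
def IsGraded (X : SCplx V) (m : ℕ) (c : Finset V → ZMod 2) : Prop :=
  ∀ σ, c σ ≠ 0 → σ ∈ X.cfaces m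

/-- boundary map (all degrees simultaneously, with the reduced convention `∂₀{v} = ∅`). -/
def bdry (X : SCplx V) (c : Finset V → ZMod 2) : Finset V → ZMod 2 := fun τ =>
  ∑ σ ∈ X.faces.filter (fun σ => τ ⊆ σ ∧ σ.card = τ.card + 1), c σ

/-- coboundary map (all degrees simultaneously). -/
def cobdry (X : SCplx V) (c : Finset V → ZMod 2) : Finset V → ZMod 2 := fun σ =>
  if σ ∈ X.faces then ∑ τ ∈ X.faces.filter (fun τ => τ ⊆ σ ∧ τ.card + 1 = σ.card), c τ else 0

/-- support of a chain/cochain. -/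
def supp (X : SCplx V) (c : Finset V → ZMod 2) : Finset (Finset V) :=
  X.faces.filter fun σ => c σ ≠ 0

/-- the size `|A|` of a chain. -/
def chainCard (X : SCplx V) (c : Finset V → ZMod 2) : ℕ := (X.supp c).card

/-- the chain consisting of a single simplex. -/
def sChain (τ : Finset V) : Finset V → ZMod 2 := fun σ => if σ = τ then 1 else 0

/-- the weight `w(τ)` in a pure `n`-dimensional complex. -/
noncomputable def w (X : SCplx V) (n : ℕ) (τ : Finset V) : ℝ :=
  (((X.cfaces (n + 1)).filter fun σ => τ ⊆ σ).card : ℝ) /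
    (((n + 1).choose τ.card : ℝ) * ((X.cfaces (n + 1)).card : ℝ))

/-- the weight `w(φ)` of a cochain. -/
noncomputable def wC (X : SCplx V) (n : ℕ) (c : Finset V → ZMod 2) : ℝ :=
  ∑ τ ∈ X.supp c, X.w n τ

/-- `φ ∈ B^k(X)`, i.e. `φ` is in the image of `d_{k-1}` on `C^{k-1}(X)`. -/
def IsCoboundary (X : SCplx V) (k : ℕ) (φ : Finset V → ZMod 2) : Prop :=
  ∃ ψ, X.IsGraded k ψ ∧ φ = X.cobdry ψ

/-- evaluation `φ(A)` of a cochain on a chain. -/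
def pair (X : SCplx V) (φ c : Finset V → ZMod 2) : ZMod 2 :=
  ∑ τ ∈ X.faces, φ τ * c τ

/-- A cone function for dimensions `-1,…,K-1` (i.e. a `(K-1)`-cone function)
with apex `v`; chains of dimension `j` are represented in grade (cardinality) `j+1`. -/
structure ConeFun (X : SCplx V) (K : ℕ) (v : V) where
  toFun : (Finset V → ZMod 2) → (Finset V → ZMod 2)
  map_add : ∀ c₁ c₂, toFun (c₁ + c₂) = toFun c₁ + toFun c₂
  graded : ∀ m ≤ K, ∀ c, X.IsGraded m c → X.IsGraded (m + 1) (toFun c)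
  apex : toFun (sChain ∅) = sChain {v}
  cone_eq : ∀ m, 1 ≤ m → m ≤ K → ∀ c, X.IsGraded m c →
    X.bdry (toFun c) = c + toFun (X.bdry c)

/-- the volume of a cone function. -/
def ConeFun.Vol {X : SCplx V} {K : ℕ} {v : V} (C : ConeFun X K v) : ℕ :=
  (X.cfaces K).sup fun τ => X.chainCard (C.toFun (sChain τ))

/-- the cone radius `Crad_{K-1}(X)`. -/
noncomputable def Crad (X : SCplx V) (K : ℕ) : ℕ∞ :=
  ⨅ (v : V) (C : ConeFun X K v), (C.Vol : ℕ∞)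

/-- push-forward of chains along a permutation of the vertices. -/
def pushChain (e : Equiv.Perm V) (c : Finset V → ZMod 2) : Finset V → ZMod 2 :=
  fun σ => c (σ.image e.symm)

/-- the action `ρ(g).f` of a group element on a cone function (on the level of raw maps). -/
def coneAct {G : Type*} [Group G] (ρ : G →* Equiv.Perm V) (g : G)
    (f : (Finset V → ZMod 2) → (Finset V → ZMod 2)) :
    (Finset V → ZMod 2) → (Finset V → ZMod 2) :=
  fun c => pushChain (ρ g) (f (pushChain (ρ g⁻¹) c))

/-- `c ∈ Z_k(X)` : a cycle of dimension `k` (grade `k+1`). -/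
def IsCycle (X : SCplx V) (k : ℕ) (c : Finset V → ZMod 2) : Prop :=
  X.IsGraded (k + 1) c ∧ X.bdry c = 0

/-- `c ∈ B_k(X)` : a boundary of dimension `k` (grade `k+1`). -/
def IsBdryChain (X : SCplx V) (k : ℕ) (c : Finset V → ZMod 2) : Prop :=
  ∃ a, X.IsGraded (k + 2) a ∧ X.bdry a = c

/-- the size of the smallest `k`-systole. -/
noncomputable def Sys (X : SCplx V) (k : ℕ) : ℕ∞ :=
  ⨅ (c : {c : Finset V → ZMod 2 // X.IsCycle k c ∧ ¬X.IsBdryChain k c}),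
    (X.chainCard c.1 : ℕ∞)

/-- `Fill_k(B)` : the size of the smallest filling of the cycle `B`. -/
noncomputable def FillB (X : SCplx V) (k : ℕ) (B : Finset V → ZMod 2) : ℕ∞ :=
  ⨅ (a : {a : Finset V → ZMod 2 // X.IsGraded (k + 2) a ∧ X.bdry a = B}),
    (X.chainCard a.1 : ℕ∞)

/-- `Fill_k(M)` : the filling function. -/
noncomputable def Fill (X : SCplx V) (k : ℕ) (M : ℕ∞) : ℕ∞ :=
  ⨆ (B : {B : Finset V → ZMod 2 // X.IsCycle k B ∧ (X.chainCard B : ℕ∞) ≤ M}),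
    X.FillB k B.1

/-- the constants `M_{k-1}` of Proposition `filling constants prop` (index shifted by one:
`Mconst X (k+1) = M_k`). -/
noncomputable def Mconst (X : SCplx V) : ℕ → ℕ∞
  | 0 => 1
  | (j + 1) => X.Fill j (((j : ℕ∞) + 1) * X.Mconst j + 1)

end SCplx

/-- Adjacency in the coset complex `X(G,(K i))`: the cosets `u = gK_i` and `v = g'K_j`
are adjacent iff `i ≠ j` and `gK_i ∩ g'K_j ≠ ∅`. -/
def cosetAdj {G : Type*} [Group G] {I : Type*} (K : I → Subgroup G)
    (u v : (i : I) × (G ⧸ K i)) : Prop :=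
  u.1 ≠ v.1 ∧
    ∃ x : G, (QuotientGroup.mk x : G ⧸ K u.1) = u.2 ∧ (QuotientGroup.mk x : G ⧸ K v.1) = v.2

attribute [local instance] Classical.propDecidable

/-! A uniformly random `g : G` gives a uniformly random top face, the chamber `{gK_i : i ∈ I}`, so
weights of cochains are averages over `G`, and a `0`-cochain `φ` becomes a function
`F g i = φ {gK_i}` whose `i`-th coordinate is unchanged when `g` is multiplied on the right by an
element of `K_i`. A factorization `g = g_1 ⋯ g_l` therefore joins the chambers of `h` and `h * g`
by a gallery of `l + 1` chambers, consecutive ones sharing a vertex, and `φ` can only differ at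
its two ends if it is nonconstant on one of these chambers. Each of them is uniformly random when
`h` is, so averaging over `h` yields a value `c` from which `φ` differs with probability at most
`L + 1` times the probability `p` that `φ` is nonconstant on a chamber. Finally, the edges of a
simplex on `n + 1` vertices that leave a proper nonempty vertex set number at least `n`, whence
`w(d_0 φ) ≥ (2 / (n + 1)) p`.
-/

section Averaging

variable {G I α : Type*} [Group G] [Fintype G] [DecidableEq α] {F : G → I → α}
  {P : G → Prop} [DecidablePred P]

theorem card_apply_mul_prod_ne_le (hP : ∀ h i j, F h i ≠ F h j → P h) {gs : List G}
    (hgs : ∀ x ∈ gs, ∃ i, ∀ h, F (h * x) i = F h i) (i j : I) :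
    #{h | F (h * gs.prod) j ≠ F h i} ≤ (gs.length + 1) * #{h | P h} := by
  induction gs generalizing i with
  | nil =>
    simp only [List.prod_nil, mul_one, List.length_nil, zero_add, one_mul]
    exact card_le_card (monotone_filter_right _ fun h _ => hP h j i)
  | cons x gs ih =>
    obtain ⟨k, hk⟩ := hgs x List.mem_cons_self
    have tail := ih (fun y hy => hgs y (List.mem_cons_of_mem x hy)) k
    have translate :
        #{h | F (h * x * gs.prod) j ≠ F (h * x) k} = #{h | F (h * gs.prod) j ≠ F h k} :=
      card_equiv (Equiv.mulRight x) fun h => by simp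
    have split (h : G) : F (h * (x :: gs).prod) j ≠ F h i →
        F (h * x * gs.prod) j ≠ F (h * x) k ∨ P h := by
      rw [List.prod_cons, ← mul_assoc, hk]
      exact fun hne => (hne.ne_or_ne (F h k)).imp_right fun hi => hP h k i hi.symm
    calc #{h | F (h * (x :: gs).prod) j ≠ F h i}
        ≤ #{h | F (h * x * gs.prod) j ≠ F (h * x) k} + #{h | P h} :=
          (card_le_card (monotone_filter_right univ fun h _ => split h)).trans
            (by rw [filter_or]; exact card_union_le _ _)
      _ ≤ ((x :: gs).length + 1) * #{h | P h} := by
          rw [translate, List.length_cons, add_one_mul (gs.length + 1)]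
          gcongr

theorem exists_sum_card_apply_ne_le [Fintype I] [Nonempty I]
    (hP : ∀ h i j, F h i ≠ F h j → P h) {L : ℕ} (hL : ∀ g : G, ∃ gs : List G,
      gs.length ≤ L ∧ (∀ x ∈ gs, ∃ i, ∀ h, F (h * x) i = F h i) ∧ gs.prod = g) :
    ∃ c, ∑ g, #{i | F g i ≠ c} ≤ Fintype.card I * ((L + 1) * #{h | P h}) := by
  obtain ⟨i₀⟩ := ‹Nonempty I›
  have pointwise (g : G) (i : I) :
      #{h | F (h * g) i ≠ F h i₀} ≤ (L + 1) * #{h | P h} := by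
    obtain ⟨gs, hlen, hgs, rfl⟩ := hL g
    exact (card_apply_mul_prod_ne_le hP hgs i₀ i).trans (by gcongr)
  have translate (h : G) : ∑ g, #{i | F g i ≠ F h i₀} = ∑ g, #{i | F (h * g) i ≠ F h i₀} :=
    (Equiv.sum_comp (Equiv.mulLeft h) fun g => #{i | F g i ≠ F h i₀}).symm
  have total : ∑ h, ∑ g, #{i | F g i ≠ F h i₀} ≤
      ∑ _h : G, Fintype.card I * ((L + 1) * #{h | P h}) := by
    calc ∑ h, ∑ g, #{i | F g i ≠ F h i₀}
        = ∑ g, ∑ i, #{h | F (h * g) i ≠ F h i₀} := by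
          simp_rw [translate, card_filter]
          rw [sum_comm]
          exact sum_congr rfl fun g _ => sum_comm
      _ ≤ ∑ _g : G, ∑ _i : I, (L + 1) * #{h | P h} :=
          sum_le_sum fun g _ => sum_le_sum fun i _ => pointwise g i
      _ = _ := by simp only [sum_const, card_univ, smul_eq_mul]
  obtain ⟨h, -, hh⟩ := exists_le_of_sum_le univ_nonempty total
  exact ⟨F h i₀, hh⟩

end Averaging

namespace SCplx

section Cochain

variable {V : Type} [DecidableEq V] {X : SCplx V} {n k : ℕ} {φ ψ : Finset V → ZMod 2}
  {σ τ : Finset V}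

theorem mem_cfaces : σ ∈ X.cfaces k ↔ σ ∈ X.faces ∧ #σ = k := mem_filter

theorem mem_supp : σ ∈ X.supp φ ↔ σ ∈ X.faces ∧ φ σ ≠ 0 := mem_filter

theorem IsGraded.add (hφ : X.IsGraded k φ) (hψ : X.IsGraded k ψ) : X.IsGraded k (φ + ψ) := by
  intro σ hσ
  by_contra hmem
  have hφσ : φ σ = 0 := not_imp_comm.1 (hφ σ) hmem
  have hψσ : ψ σ = 0 := not_imp_comm.1 (hψ σ) hmem
  exact hσ (by rw [Pi.add_apply, hφσ, hψσ, add_zero])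

theorem IsGraded.cobdry (hφ : X.IsGraded k φ) : X.IsGraded (k + 1) (X.cobdry φ) := by
  intro σ hσ
  have hface : σ ∈ X.faces := by
    by_contra h
    exact hσ (if_neg h)
  rw [SCplx.cobdry, if_pos hface] at hσ
  obtain ⟨τ, hτ, hφτ⟩ := exists_ne_zero_of_sum_ne_zero hσ
  rw [mem_cfaces, ← (mem_filter.1 hτ).2.2, (mem_cfaces.1 (hφ τ hφτ)).2]
  exact ⟨hface, rfl⟩

theorem isGraded_single_empty (c : ZMod 2) : X.IsGraded 0 (Pi.single ∅ c) := by
  intro σ hσ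
  obtain rfl : σ = ∅ := by
    by_contra h
    exact hσ (Pi.single_eq_of_ne h _)
  exact mem_cfaces.2 ⟨X.empty_mem, card_empty⟩

theorem cobdry_single_empty_singleton (c : ZMod 2) {v : V} (hv : {v} ∈ X.faces) :
    X.cobdry (Pi.single ∅ c) {v} = c := by
  simp [cobdry, hv, Pi.single_apply, X.empty_mem]

theorem cobdry_pair {u v : V} (huv : u ≠ v) (hface : {u, v} ∈ X.faces) :
    X.cobdry φ {u, v} = φ {u} + φ {v} := by
  have facets : {τ ∈ X.faces | τ ⊆ {u, v} ∧ #τ + 1 = #{u, v}} = {{u}, {v}} := by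
    ext τ
    simp only [card_pair huv, mem_filter, mem_insert, mem_singleton]
    constructor
    · rintro ⟨-, hsub, hcard⟩
      obtain ⟨x, rfl⟩ := card_eq_one.1 (Nat.succ_injective hcard)
      simpa using hsub
    · rintro (rfl | rfl) <;> exact ⟨X.down_closed _ hface _ (by simp), by simp, by simp⟩
  rw [cobdry, if_pos hface, facets, sum_pair (singleton_injective.ne huv)]

theorem card_le_card_supp_cobdry_add_one (hσ : σ ∈ X.faces)
    (hφ : ∃ u ∈ σ, ∃ v ∈ σ, φ {u} ≠ φ {v}) :
    #σ ≤ #{τ ∈ X.supp (X.cobdry φ) | τ ⊆ σ} + 1 := by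
  obtain ⟨u, hu, v, hv, huv⟩ := hφ
  let S : Finset V := {x ∈ σ | φ {x} = φ {u}}
  let T : Finset V := {x ∈ σ | φ {x} ≠ φ {u}}
  have hS : 0 < #S := card_pos.2 ⟨u, mem_filter.2 ⟨hu, rfl⟩⟩
  have hT : 0 < #T := card_pos.2 ⟨v, mem_filter.2 ⟨hv, huv.symm⟩⟩
  have hST : #S + #T = #σ := card_filter_add_card_filter_not _
  have crossing : #(S ×ˢ T) ≤ #{τ ∈ X.supp (X.cobdry φ) | τ ⊆ σ} := by
    apply card_le_card_of_injOn fun p => {p.1, p.2}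
    · rintro ⟨x, y⟩ hxy
      obtain ⟨⟨hx, hφx⟩, hy, hφy⟩ : (x ∈ σ ∧ φ {x} = φ {u}) ∧ y ∈ σ ∧ φ {y} ≠ φ {u} := by
        simpa [S, T] using hxy
      have hφxy : φ {x} ≠ φ {y} := fun h => hφy (h.symm.trans hφx)
      have hsub : {x, y} ⊆ σ := insert_subset hx (singleton_subset_iff.2 hy)
      have hface := X.down_closed σ hσ _ hsub
      refine mem_filter.2 ⟨mem_supp.2 ⟨hface, ?_⟩, hsub⟩
      rw [cobdry_pair (ne_of_apply_ne (fun z => φ {z}) hφxy) hface]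
      exact mt CharTwo.add_eq_zero.1 hφxy
    · rintro ⟨x, y⟩ hxy ⟨a, b⟩ hab heq
      obtain ⟨hx, hy⟩ : x ∈ ({a, b} : Finset V) ∧ y ∈ ({a, b} : Finset V) := by
        simp [← show ({x, y} : Finset V) = {a, b} from heq]
      simp only [S, T, coe_product, coe_filter, Set.mem_prod, Set.mem_ofPred_eq] at hxy hab
      grind
  rw [card_product] at crossing
  -- `(#S - 1) * (#T - 1) ≥ 0`
  nlinarith

end Cochain

section Weight

variable {V : Type} [DecidableEq V] {X : SCplx V} {n k : ℕ} {φ ψ : Finset V → ZMod 2}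

theorem w_nonneg (X : SCplx V) (n : ℕ) (τ : Finset V) : 0 ≤ X.w n τ := by
  unfold w
  positivity

theorem wC_nonneg (X : SCplx V) (n : ℕ) (φ : Finset V → ZMod 2) : 0 ≤ X.wC n φ :=
  sum_nonneg fun τ _ => X.w_nonneg n τ

/-- The weighted distance `min_{ψ ∈ B^k(X)} w(φ + ψ)` of a cochain `φ` from the coboundaries, the
denominator in the definition of `Exp^k_b`. -/
noncomputable def coboundaryDist (X : SCplx V) (n k : ℕ) (φ : Finset V → ZMod 2) : ℝ :=
  sInf {r : ℝ | ∃ ψ, X.IsCoboundary k ψ ∧ r = X.wC n (φ + ψ)}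

theorem coboundaryDist_nonneg (X : SCplx V) (n k : ℕ) (φ : Finset V → ZMod 2) :
    0 ≤ X.coboundaryDist n k φ := by
  refine Real.sInf_nonneg ?_
  rintro r ⟨ψ, -, rfl⟩
  exact X.wC_nonneg n _

theorem coboundaryDist_le (hψ : X.IsCoboundary k ψ) :
    X.coboundaryDist n k φ ≤ X.wC n (φ + ψ) := by
  refine csInf_le ⟨0, ?_⟩ ⟨ψ, hψ, rfl⟩
  rintro r ⟨ψ, -, rfl⟩
  exact X.wC_nonneg n _

variable {Γ : Type*} [Fintype Γ] {f : Γ → Finset V}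

/-- `f` takes values in `X(n)` and hits every element of `X(n)` equally often, so that a uniformly
random parameter gives a uniformly random top face. -/
structure EquidistributesTopFaces (X : SCplx V) (n : ℕ) (f : Γ → Finset V) : Prop where
  apply_mem : ∀ g, f g ∈ X.cfaces (n + 1)
  card_fiber : ∀ σ ∈ X.cfaces (n + 1), ∀ τ ∈ X.cfaces (n + 1), #{g | f g = σ} = #{g | f g = τ}

namespace EquidistributesTopFaces

variable [Nonempty Γ]

theorem w_eq (hf : X.EquidistributesTopFaces n f) (τ : Finset V) :
    X.w n τ = #{g | τ ⊆ f g} / ((n + 1).choose #τ * Fintype.card Γ) := by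
  obtain ⟨g₀⟩ := ‹Nonempty Γ›
  have hfiber : ∀ σ ∈ X.cfaces (n + 1), #{g | f g = σ} = #{g | f g = f g₀} :=
    fun σ hσ => hf.card_fiber σ hσ _ (hf.apply_mem g₀)
  have hpos : (#{g | f g = f g₀} : ℝ) ≠ 0 :=
    Nat.cast_ne_zero.2 (card_ne_zero.2 ⟨g₀, (mem_filter_univ g₀).2 rfl⟩)
  have count (P : Finset V → Prop) [DecidablePred P] :
      #{g : Γ | P (f g)} = #{σ ∈ X.cfaces (n + 1) | P σ} * #{g | f g = f g₀} := by
    rw [card_eq_sum_card_fiberwise (f := f) (t := {σ ∈ X.cfaces (n + 1) | P σ})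
      fun g hg => mem_filter.2 ⟨hf.apply_mem g, (mem_filter_univ g).1 hg⟩]
    refine sum_const_nat fun σ hσ => ?_
    obtain ⟨hσ, hPσ⟩ := mem_filter.1 hσ
    rw [← hfiber σ hσ, filter_filter]
    exact congrArg card (filter_congr fun g _ => and_iff_right_of_imp fun h => h ▸ hPσ)
  have htotal : Fintype.card Γ = #(X.cfaces (n + 1)) * #{g | f g = f g₀} := by
    simpa using count fun _ => True
  rw [w, count (τ ⊆ ·), htotal]
  push_cast
  rw [← mul_assoc, mul_div_mul_right _ _ hpos]

theorem wC_eq (hf : X.EquidistributesTopFaces n f) (hφ : X.IsGraded k φ) :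
    X.wC n φ = (∑ g, #{τ ∈ X.supp φ | τ ⊆ f g} : ℕ) /
      ((n + 1).choose k * Fintype.card Γ) := by
  have swap : ∑ τ ∈ X.supp φ, #{g | τ ⊆ f g} = ∑ g, #{τ ∈ X.supp φ | τ ⊆ f g} :=
    sum_card_bipartiteAbove_eq_sum_card_bipartiteBelow fun τ g => τ ⊆ f g
  rw [← swap, Nat.cast_sum, sum_div]
  refine sum_congr rfl fun τ hτ => ?_
  rw [hf.w_eq, (mem_cfaces.1 (hφ τ (mem_supp.1 hτ).2)).2]

theorem wC_add_cobdry_single_empty (hf : X.EquidistributesTopFaces n f) (hφ : X.IsGraded 1 φ)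
    (c : ZMod 2) :
    X.wC n (φ + X.cobdry (Pi.single ∅ c)) =
      (∑ g, #{v ∈ f g | φ {v} ≠ c} : ℕ) / ((n + 1) * Fintype.card Γ) := by
  have hgraded := hφ.add (isGraded_single_empty c).cobdry
  have vertices (g : Γ) : {τ ∈ X.supp (φ + X.cobdry (Pi.single ∅ c)) | τ ⊆ f g} =
      {v ∈ f g | φ {v} ≠ c}.map ⟨singleton, singleton_injective⟩ := by
    have mem_iff {v : V} (hv : v ∈ f g) :
        {v} ∈ X.supp (φ + X.cobdry (Pi.single ∅ c)) ↔ φ {v} ≠ c := by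
      have hface : {v} ∈ X.faces := X.down_closed _ (mem_cfaces.1 (hf.apply_mem g)).1 _
        (singleton_subset_iff.2 hv)
      rw [mem_supp, and_iff_right hface, Pi.add_apply, cobdry_single_empty_singleton c hface,
        Ne, CharTwo.add_eq_zero]
    ext τ
    simp only [mem_filter, mem_map, Function.Embedding.coeFn_mk]
    constructor
    · rintro ⟨hτ, hsub⟩
      obtain ⟨v, rfl⟩ := card_eq_one.1 (mem_cfaces.1 (hgraded τ (mem_supp.1 hτ).2)).2
      have hv := singleton_subset_iff.1 hsub
      exact ⟨v, ⟨hv, (mem_iff hv).1 hτ⟩, rfl⟩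
    · rintro ⟨v, ⟨hv, hne⟩, rfl⟩
      exact ⟨(mem_iff hv).2 hne, singleton_subset_iff.2 hv⟩
  simp only [hf.wC_eq hgraded, vertices, card_map, Nat.choose_one_right, Nat.cast_add_one]

theorem card_nonconstant_le_wC_cobdry (hf : X.EquidistributesTopFaces n f)
    (hφ : X.IsGraded 1 φ) :
    2 / (n + 1) * (#{g | ∃ u ∈ f g, ∃ v ∈ f g, φ {u} ≠ φ {v}} / Fintype.card Γ) ≤
      X.wC n (X.cobdry φ) := by
  set p := #{g | ∃ u ∈ f g, ∃ v ∈ f g, φ {u} ≠ φ {v}}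
  set E := ∑ g, #{τ ∈ X.supp (X.cobdry φ) | τ ⊆ f g}
  have hE : n * p ≤ E := by
    rw [mul_comm, ← smul_eq_mul, ← sum_const]
    refine (sum_le_sum fun g hg => ?_).trans (sum_le_sum_of_subset (subset_univ _))
    obtain ⟨hface, hcard⟩ := mem_cfaces.1 (hf.apply_mem g)
    have := card_le_card_supp_cobdry_add_one hface ((mem_filter_univ g).1 hg)
    omega
  obtain rfl | hn := n.eq_zero_or_pos
  · have hp : p = 0 := by
      refine card_eq_zero.2 (filter_eq_empty_iff.2 fun g _ => ?_)
      rintro ⟨u, hu, v, hv, huv⟩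
      obtain ⟨x, hx⟩ := card_eq_one.1 (mem_cfaces.1 (hf.apply_mem g)).2
      simp only [hx, mem_singleton] at hu hv
      exact huv (by rw [hu, hv])
    simpa [hp] using X.wC_nonneg 0 (X.cobdry φ)
  · rw [hf.wC_eq hφ.cobdry, Nat.cast_choose_two, Nat.cast_add_one, add_sub_cancel_right]
    calc 2 / (n + 1) * (p / Fintype.card Γ : ℝ)
        = (n * p : ℕ) / ((n + 1) * n / 2 * Fintype.card Γ) := by
          push_cast
          field_simp
      _ ≤ E / ((n + 1) * n / 2 * Fintype.card Γ) := by gcongr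

end EquidistributesTopFaces

open scoped Pointwise in
theorem equidistributesTopFaces_smul {G : Type*} [Group G] [Fintype G] [MulAction G V]
    {σ₀ : Finset V} (hmem : ∀ g : G, g • σ₀ ∈ X.cfaces (n + 1))
    (htrans : ∀ σ ∈ X.cfaces (n + 1), ∃ g : G, g • σ₀ = σ) :
    X.EquidistributesTopFaces n fun g : G => g • σ₀ := by
  have card_fiber : ∀ σ ∈ X.cfaces (n + 1), #{g : G | g • σ₀ = σ} = #{g : G | g • σ₀ = σ₀} := by
    intro σ hσ
    obtain ⟨g, rfl⟩ := htrans σ hσ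
    exact (card_equiv (Equiv.mulLeft g) fun x => by simp [mul_smul]).symm
  exact ⟨hmem, fun σ hσ τ hτ => (card_fiber σ hσ).trans (card_fiber τ hτ).symm⟩

end Weight

end SCplx

section CosetComplex

variable {G : Type*} [Group G] {I : Type*} (K : I → Subgroup G)

/-- The vertex `gK_i` of the coset complex. -/
def cosetVertex (g : G) (i : I) : (i : I) × (G ⧸ K i) := ⟨i, g⟩

theorem cosetVertex_injective (g : G) : Function.Injective (cosetVertex K g) :=
  fun _ _ h => congrArg Sigma.fst h

variable {K} in
theorem cosetVertex_mul_of_mem {i : I} {x : G} (g : G) (hx : x ∈ K i) :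
    cosetVertex K (g * x) i = cosetVertex K g i :=
  congrArg (Sigma.mk i) (QuotientGroup.mk_mul_of_mem g hx)

/-- The chamber `{gK_i : i ∈ I}`, the top face of the coset complex attached to `g`. -/
def cosetChamber [Fintype I] (g : G) : Finset ((i : I) × (G ⧸ K i)) :=
  univ.map ⟨cosetVertex K g, cosetVertex_injective K g⟩

theorem card_cosetChamber [Fintype I] (g : G) : #(cosetChamber K g) = Fintype.card I :=
  card_map _

theorem mem_cosetChamber [Fintype I] {g : G} {u : (i : I) × (G ⧸ K i)} :
    u ∈ cosetChamber K g ↔ ∃ i, cosetVertex K g i = u := by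
  simp [cosetChamber]

theorem cosetAdj_of_mem_cosetChamber [Fintype I] {g : G} {u v : (i : I) × (G ⧸ K i)}
    (hu : u ∈ cosetChamber K g) (hv : v ∈ cosetChamber K g) (huv : u ≠ v) : cosetAdj K u v := by
  obtain ⟨i, rfl⟩ := (mem_cosetChamber K).1 hu
  obtain ⟨j, rfl⟩ := (mem_cosetChamber K).1 hv
  exact ⟨fun h : i = j => huv (congrArg _ h), g, rfl, rfl⟩

open scoped Pointwise in
theorem smul_cosetChamber [Fintype I] [DecidableEq ((i : I) × (G ⧸ K i))] (g x : G) :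
    g • cosetChamber K x = cosetChamber K (g * x) := by
  simp only [cosetChamber, map_eq_image, smul_finset_def, image_image]
  rfl

open SCplx

variable {n : ℕ} {I : Type} [Fintype I] [DecidableEq I] {G : Type} [Group G]

theorem equidistributesTopFaces_cosetChamber [Fintype G] (hI : Fintype.card I = n + 1)
    {K : I → Subgroup G} {X : SCplx ((i : I) × (G ⧸ K i))}
    (hX : ∀ σ : Finset ((i : I) × (G ⧸ K i)),
      (∀ u ∈ σ, ∀ v ∈ σ, u ≠ v → cosetAdj K u v) → σ ∈ X.faces)
    (htrans : ∀ σ ∈ X.cfaces (n + 1), ∀ τ ∈ X.cfaces (n + 1),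
      ∃ g : G, σ.image (fun u => (⟨u.1, g • u.2⟩ : (i : I) × (G ⧸ K i))) = τ) :
    X.EquidistributesTopFaces n (cosetChamber K) := by
  have hmem (g : G) : cosetChamber K g ∈ X.cfaces (n + 1) :=
    mem_cfaces.2 ⟨hX _ fun _ hu _ hv => cosetAdj_of_mem_cosetChamber K hu hv,
      (card_cosetChamber K g).trans hI⟩
  have orbit := smul_cosetChamber K (x := 1)
  simp only [mul_one] at orbit
  simpa only [orbit] using equidistributesTopFaces_smul (fun g => orbit g ▸ hmem g)
    (htrans _ (hmem 1))

theorem exists_wC_add_cobdry_single_empty_le [Fintype G] (hI : Fintype.card I = n + 1)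
    {K : I → Subgroup G} {X : SCplx ((i : I) × (G ⧸ K i))}
    (hf : X.EquidistributesTopFaces n (cosetChamber K)) {L : ℕ}
    (hL : ∀ g : G, ∃ gs : List G,
      gs.length ≤ L ∧ (∀ x ∈ gs, ∃ i, x ∈ K i) ∧ gs.prod = g)
    {φ : Finset ((i : I) × (G ⧸ K i)) → ZMod 2} (hφ : X.IsGraded 1 φ) :
    ∃ c : ZMod 2, X.wC n (φ + X.cobdry (Pi.single ∅ c)) ≤
      (L + 1) * (#{g | ∃ u ∈ cosetChamber K g, ∃ v ∈ cosetChamber K g, φ {u} ≠ φ {v}} /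
        Fintype.card G) := by
  have : Nonempty I := Fintype.card_pos_iff.1 (hI ▸ n.succ_pos)
  let F (g : G) (i : I) : ZMod 2 := φ {cosetVertex K g i}
  have hF {x : G} {i : I} (hx : x ∈ K i) (h : G) : F (h * x) i = F h i := by
    simp only [F, cosetVertex_mul_of_mem h hx]
  have hmem (g : G) (i : I) : cosetVertex K g i ∈ cosetChamber K g :=
    (mem_cosetChamber K).2 ⟨i, rfl⟩
  obtain ⟨c, hc⟩ := exists_sum_card_apply_ne_le (F := F)
      (P := fun g => ∃ u ∈ cosetChamber K g, ∃ v ∈ cosetChamber K g, φ {u} ≠ φ {v})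
      (fun g i j hne => ⟨_, hmem g i, _, hmem g j, hne⟩) fun g => by
    obtain ⟨gs, hlen, hgs, hprod⟩ := hL g
    exact ⟨gs, hlen, fun x hx => (hgs x hx).imp fun _ => hF, hprod⟩
  refine ⟨c, ?_⟩
  have disagreements (g : G) : #{v ∈ cosetChamber K g | φ {v} ≠ c} = #{i | F g i ≠ c} := by
    simp only [cosetChamber, filter_map, card_map]
    rfl
  rw [hI] at hc
  simp only [hf.wC_add_cobdry_single_empty hφ, disagreements]
  set p := #{g | ∃ u ∈ cosetChamber K g, ∃ v ∈ cosetChamber K g, φ {u} ≠ φ {v}}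
  calc (∑ g, #{i | F g i ≠ c} : ℕ) / ((n + 1) * Fintype.card G : ℝ)
      ≤ ((n + 1) * ((L + 1) * p) : ℕ) / ((n + 1) * Fintype.card G) := by gcongr
    _ = (L + 1) * (p / Fintype.card G) := by
        push_cast
        field_simp

theorem stmt11_general [Finite G] (hI : Fintype.card I = n + 1) (K : I → Subgroup G)
    (X : SCplx ((i : I) × (G ⧸ K i)))
    (hX : ∀ σ : Finset ((i : I) × (G ⧸ K i)),
      σ ∈ X.faces ↔ ∀ u ∈ σ, ∀ v ∈ σ, u ≠ v → cosetAdj K u v)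
    (htrans : ∀ σ ∈ X.cfaces (n + 1), ∀ τ ∈ X.cfaces (n + 1),
      ∃ g : G, σ.image (fun u => (⟨u.1, g • u.2⟩ : (i : I) × (G ⧸ K i))) = τ)
    {L : ℕ}
    (hL : ∀ g : G, ∃ gs : List G,
      gs.length ≤ L ∧ (∀ x ∈ gs, ∃ i, x ∈ K i) ∧ gs.prod = g)
    {φ : Finset ((i : I) × (G ⧸ K i)) → ZMod 2} (hφ : X.IsGraded 1 φ) :
    2 / ((n + 1) * (L + 1)) * X.coboundaryDist n 0 φ ≤ X.wC n (X.cobdry φ) := by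
  cases nonempty_fintype G
  have hf := equidistributesTopFaces_cosetChamber hI (fun σ => (hX σ).2) htrans
  obtain ⟨c, hc⟩ := exists_wC_add_cobdry_single_empty_le hI hf hL hφ
  have hdist : X.coboundaryDist n 0 φ ≤ _ :=
    (coboundaryDist_le ⟨_, isGraded_single_empty c, rfl⟩).trans hc
  refine le_trans ?_ (hf.card_nonconstant_le_wC_cobdry hφ)
  set p : ℝ := #{g | ∃ u ∈ cosetChamber K g, ∃ v ∈ cosetChamber K g, φ {u} ≠ φ {v}} /
    Fintype.card G
  calc 2 / ((n + 1) * (L + 1)) * X.coboundaryDist n 0 φ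
      ≤ 2 / ((n + 1) * (L + 1)) * ((L + 1) * p) := by gcongr
    _ = 2 / (n + 1) * p := by field_simp

end CosetComplex

open SCplx in
/-- Let `G` be a finite group with subgroups `K_0, …, K_n` (`n+1 ≥ 2` of
them), let `X = X(G,(K i))` be the coset complex (the clique complex of the coset adjacency
graph), and assume `G` acts transitively on `X(n)`. If every `g ∈ G` is a product of at most
`L` elements of `⋃ K_i` (so that `N_0' = L + 1` for the minimal such `L`), then
`Exp^0_b(X) ≥ 1/((n+1)·N_0')`, stated pointwise: for every `0`-cochain `φ ∉ B^0(X)`,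
`(1/((n+1)(L+1))) · dist(φ, B^0(X)) ≤ w(d_0 φ)`. -/
theorem stmt11 (n : ℕ) (hn : 1 ≤ n) {G : Type} [Group G] [Fintype G]
    (K : Fin (n + 1) → Subgroup G)
    (X : SCplx ((i : Fin (n + 1)) × (G ⧸ K i)))
    (hX : ∀ σ : Finset ((i : Fin (n + 1)) × (G ⧸ K i)),
      σ ∈ X.faces ↔ ∀ u ∈ σ, ∀ v ∈ σ, u ≠ v → cosetAdj K u v)
    (htrans : ∀ σ ∈ X.cfaces (n + 1), ∀ τ ∈ X.cfaces (n + 1),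
      ∃ g : G, σ.image (fun u => (⟨u.1, g • u.2⟩ : (i : Fin (n + 1)) × (G ⧸ K i))) = τ)
    (L : ℕ)
    (hL : ∀ g : G, ∃ gs : List G,
      gs.length ≤ L ∧ (∀ x ∈ gs, ∃ i, x ∈ K i) ∧ gs.prod = g) :
    ∀ φ, X.IsGraded 1 φ → ¬X.IsCoboundary 0 φ →
      (1 / (((n + 1) : ℝ) * ((L : ℝ) + 1))) *
          sInf {r : ℝ | ∃ ψ, X.IsCoboundary 0 ψ ∧ r = X.wC n (φ + ψ)} ≤
        X.wC n (X.cobdry φ) := by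
  intro φ hφ _
  exact (mul_le_mul_of_nonneg_right (by gcongr; exact one_le_two)
    (X.coboundaryDist_nonneg n 0 φ)).trans (stmt11_general (Fintype.card_fin _) K X hX htrans hL hφ)
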